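/- arXiv:2304.02507 — 3 statements merged into one kernel-verified Lean document; each statement's English description precedes it below -/
import Mathlib

section
/- Let d ≥ 1. There exist a continuous function η : ℝ^d → [0,∞) and a constant C such that: (i) whenever F ∈ 𝒮(ℝ^d) satisfies supp F̂ ⊆ [−1/2,1/2]^d, one has |F(z)| ≤ Σ_{Q ∈ 𝒬_all} a_Q χ_Q(z) ≤ C (|F| ∗ η)(z) for all z ∈ ℝ^d, where 𝒬_all is the collection of all lattice unit cubes in ℝ^d and a_Q := sup_{w ∈ Q} |F(w)|; and (ii) for every N ∈ ℕ there is a constant C_N with η(z) ≤ C_N (1 + 2|z|_∞)^{−N} for all z ∈ ℝ^d. -/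
/-!
A function `F` whose frequencies lie in `[-1/2,1/2]^d` reproduces itself, `F = F ∗ ψ`, where `ψ` is
any fixed Schwartz function whose Fourier transform is `1` on that cube (`exists_reproducing`).
Points of one unit cube differ by at most `√d`, so with
`η(z) = sup {‖ψ(z + u)‖ : ‖u‖ ≤ √d}` (`envelope`) the values of `‖F‖` on a cube containing `z` are
all at most `(‖F‖ ∗ η)(z)` (`norm_le_envelope_conv`). At most `2 ^ d` cubes contain `z`
(`cubesAt`), which gives the upper bound with `C = 2 ^ d`; the lower bound only needs one cube
containing `z`, obtained by rounding coordinates. The envelope of a Schwartz function over a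
compact set of translates is continuous and still decays rapidly (`envelope_decay`).
-/

open MeasureTheory Filter Metric Complex
open scoped RealInnerProductSpace ENNReal NNReal Classical

noncomputable section

abbrev Rd (d : ℕ) : Type := EuclideanSpace ℝ (Fin d)

/-- The Fourier transform with the convention `F̂(ξ) = ∫ e^{-i x·ξ} F(x) dx`. -/
def ftransform {d : ℕ} (F : Rd d → ℂ) (ξ : Rd d) : ℂ :=
  ∫ x : Rd d, Complex.exp (-Complex.I * (⟪x, ξ⟫ : ℝ)) * F x

/-- The lattice unit cube in `ℝ^d` centred at the integer point `c`. -/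
def intCube {d : ℕ} (c : Fin d → ℤ) : Set (Rd d) :=
  {z | ∀ i, |z i - (c i : ℝ)| ≤ 1 / 2}

open FourierTransform in
lemma fourier_eq_ftransform {d : ℕ} (F : Rd d → ℂ) (w : Rd d) :
    𝓕 F w = ftransform F ((2 * Real.pi) • w) := by
  rw [Real.fourier_eq', ftransform]
  congr 1
  ext x
  rw [smul_eq_mul, inner_smul_right]
  congr 2
  push_cast
  ring

lemma norm_le_sqrt {d : ℕ} {u : Rd d} (hu : ∀ i, |u i| ≤ 1) : ‖u‖ ≤ √d := by
  rw [EuclideanSpace.norm_eq]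
  apply Real.sqrt_le_sqrt
  calc ∑ i, ‖u i‖ ^ 2 ≤ ∑ _i : Fin d, (1 : ℝ) := by
        refine Finset.sum_le_sum fun i _ => ?_
        rw [Real.norm_eq_abs]
        exact pow_le_one₀ (abs_nonneg _) (hu i)
    _ = d := by simp

open FourierTransform in
/-- A Schwartz function equal to `1` in frequency on the unit cube is a convolution identity for
functions with frequencies in that cube. -/
lemma exists_reproducing (d : ℕ) : ∃ ψ : SchwartzMap (Rd d) ℂ, ∀ F : SchwartzMap (Rd d) ℂ,
    (Function.support (ftransform fun y => F y) ⊆ {ξ : Rd d | ∀ i, |ξ i| ≤ 1 / 2}) →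
    ∀ x, F x = ∫ y, F y * ψ (x - y) := by
  let b : ContDiffBump (0 : Rd d) := ⟨√d + 1, √d + 2, by positivity, by linarith⟩
  have hb : HasCompactSupport (fun x => (b x : ℂ)) :=
    b.hasCompactSupport.comp_left (g := fun r : ℝ => (r : ℂ)) (by simp)
  let φ : SchwartzMap (Rd d) ℂ :=
    hb.toSchwartzMap (Complex.ofRealCLM.contDiff.comp b.contDiff)
  have hφ : ∀ x : Rd d, ‖x‖ ≤ √d → φ x = 1 := by
    intro x hx
    have : b x = 1 := b.one_of_mem_closedBall (by
      rw [mem_closedBall_zero_iff]; exact hx.trans (by simp [b]))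
    change ((b x : ℝ) : ℂ) = 1
    rw [this]; simp
  refine ⟨𝓕⁻ φ, fun F hF x => ?_⟩
  have key : SchwartzMap.convolution (ContinuousLinearMap.mul ℂ ℂ) F (𝓕⁻ φ) = F := by
    have h : 𝓕 (SchwartzMap.convolution (ContinuousLinearMap.mul ℂ ℂ) F (𝓕⁻ φ)) = 𝓕 F := by
      rw [SchwartzMap.fourier_convolution]
      ext w
      rw [SchwartzMap.pairing_apply_apply, fourier_fourierInv_eq, ContinuousLinearMap.mul_apply']
      by_cases hw : 𝓕 F w = 0
      · rw [hw, zero_mul]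
      · have h1 : (2 * Real.pi) • w ∈ {ξ : Rd d | ∀ i, |ξ i| ≤ 1 / 2} := by
          apply hF
          rw [Function.mem_support, ← fourier_eq_ftransform]
          rwa [SchwartzMap.fourier_coe] at hw
        rw [hφ, mul_one]
        apply norm_le_sqrt
        intro i
        have h2 : |2 * Real.pi * w i| ≤ 1 / 2 := by simpa using h1 i
        rw [abs_mul, abs_of_pos (by positivity)] at h2
        nlinarith [Real.pi_gt_three, abs_nonneg (w i)]
    exact (fourierEquiv ℂ (SchwartzMap (Rd d) ℂ)).injective h
  conv_lhs => rw [← key]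
  rw [SchwartzMap.convolution_apply]
  rfl

/-- The largest value of `‖ψ‖` on the closed ball of radius `√d` about `z`; this radius is the
diameter of a unit cube. -/
def envelope {d : ℕ} (ψ : SchwartzMap (Rd d) ℂ) (z : Rd d) : ℝ :=
  sSup ((fun u => ‖ψ (z + u)‖) '' closedBall (0 : Rd d) (√d))

lemma envelope_continuous {d : ℕ} (ψ : SchwartzMap (Rd d) ℂ) : Continuous (envelope ψ) := by
  refine IsCompact.continuous_sSup (f := fun z u => ‖ψ (z + u)‖) (isCompact_closedBall _ _) ?_
  exact (ψ.continuous.comp (continuous_fst.add continuous_snd)).norm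

lemma envelope_nonneg {d : ℕ} (ψ : SchwartzMap (Rd d) ℂ) (z : Rd d) : 0 ≤ envelope ψ z := by
  apply Real.sSup_nonneg
  rintro _ ⟨u, -, rfl⟩
  exact norm_nonneg _

lemma le_envelope {d : ℕ} (ψ : SchwartzMap (Rd d) ℂ) (z u : Rd d) (hu : ‖u‖ ≤ √d) :
    ‖ψ (z + u)‖ ≤ envelope ψ z := by
  refine le_csSup ?_ ⟨u, by simpa using hu, rfl⟩
  exact ((isCompact_closedBall _ _).image
    (ψ.continuous.comp (continuous_const.add continuous_id)).norm).bddAbove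

lemma envelope_le {d : ℕ} (ψ : SchwartzMap (Rd d) ℂ) (z : Rd d) {a : ℝ} (ha : 0 ≤ a)
    (h : ∀ u : Rd d, ‖u‖ ≤ √d → ‖ψ (z + u)‖ ≤ a) : envelope ψ z ≤ a := by
  refine Real.sSup_le ?_ ha
  rintro _ ⟨u, hu, rfl⟩
  exact h u (by simpa using hu)

lemma envelope_decay {d : ℕ} (ψ : SchwartzMap (Rd d) ℂ) (N : ℕ) :
    ∃ CN : ℝ, ∀ z : Rd d, envelope ψ z ≤ CN * (1 + 2 * (⨆ i, |z i|)) ^ (-(N : ℝ)) := by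
  obtain ⟨A, hA⟩ : ∃ A : ℝ, ∀ x : Rd d, (1 + ‖x‖) ^ N * ‖ψ x‖ ≤ A :=
    ⟨_, fun x => by
      simpa using SchwartzMap.one_add_le_sup_seminorm_apply (𝕜 := ℝ) (m := (N, 0))
        le_rfl le_rfl ψ x⟩
  have hA0 : 0 ≤ A := le_trans (by positivity) (hA 0)
  refine ⟨(2 + 2 * √d) ^ N * A, fun z => ?_⟩
  have hs0 : 0 ≤ ⨆ i, |z i| := Real.iSup_nonneg fun i => abs_nonneg _
  have hsz : (⨆ i, |z i|) ≤ ‖z‖ :=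
    Real.iSup_le (fun i => by simpa using PiLp.norm_apply_le z i) (norm_nonneg _)
  set s := ⨆ i, |z i|
  have hs : 0 < (1 + 2 * s) ^ N := by positivity
  rw [Real.rpow_neg (by positivity), Real.rpow_natCast, ← div_eq_mul_inv]
  refine envelope_le ψ z (by positivity) fun u hu => ?_
  rw [le_div_iff₀ hs]
  have hz : ‖z‖ ≤ ‖z + u‖ + √d := by
    have := norm_sub_le (z + u) u
    rw [add_sub_cancel_right] at this
    linarith
  have hd : 0 ≤ √(d : ℝ) := Real.sqrt_nonneg _
  calc ‖ψ (z + u)‖ * (1 + 2 * s) ^ N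
      ≤ ‖ψ (z + u)‖ * ((2 + 2 * √d) * (1 + ‖z + u‖)) ^ N := by
        gcongr
        nlinarith [norm_nonneg (z + u), mul_nonneg hd (norm_nonneg (z + u))]
    _ = (2 + 2 * √d) ^ N * ((1 + ‖z + u‖) ^ N * ‖ψ (z + u)‖) := by rw [mul_pow]; ring
    _ ≤ _ := by gcongr; exact hA _

lemma integrable_mul_envelope {d : ℕ} (ψ F : SchwartzMap (Rd d) ℂ) (z : Rd d) :
    Integrable fun y => ‖F y‖ * envelope ψ (z - y) := by
  refine F.integrable.norm.mul_bdd (c := SchwartzMap.seminorm ℝ 0 0 ψ) ?_ ?_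
  · exact ((envelope_continuous ψ).comp (continuous_const.sub continuous_id)).aestronglyMeasurable
  · refine Eventually.of_forall fun y => ?_
    rw [Real.norm_of_nonneg (envelope_nonneg _ _)]
    exact envelope_le _ _ (apply_nonneg _ _) fun u _ => SchwartzMap.norm_le_seminorm ℝ ψ _

lemma norm_le_envelope_conv {d : ℕ} {ψ F : SchwartzMap (Rd d) ℂ}
    (h : ∀ x, F x = ∫ y, F y * ψ (x - y)) {z w : Rd d} (hzw : ‖w - z‖ ≤ √d) :
    ‖F w‖ ≤ ∫ y, ‖F y‖ * envelope ψ (z - y) := by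
  rw [h w]
  refine norm_integral_le_of_norm_le (integrable_mul_envelope ψ F z)
    (Eventually.of_forall fun y => ?_)
  rw [norm_mul]
  gcongr
  have := le_envelope ψ (z - y) (w - z) hzw
  rwa [show z - y + (w - z) = w - y by abel] at this

/-- The centres of the lattice unit cubes containing `z`. -/
def cubesAt {d : ℕ} (z : Rd d) : Finset (Fin d → ℤ) :=
  Fintype.piFinset fun i => Finset.Icc ⌈z i - 1 / 2⌉ ⌊z i + 1 / 2⌋

lemma mem_cubesAt {d : ℕ} {z : Rd d} {c : Fin d → ℤ} : c ∈ cubesAt z ↔ z ∈ intCube c := by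
  simp only [cubesAt, Fintype.mem_piFinset, Finset.mem_Icc, Int.ceil_le, Int.le_floor, intCube,
    Set.mem_ofPred_eq, abs_le]
  refine forall_congr' fun i => ?_
  constructor <;> rintro ⟨h1, h2⟩ <;> constructor <;> linarith

lemma card_cubesAt_le {d : ℕ} (z : Rd d) : (cubesAt z).card ≤ 2 ^ d := by
  rw [cubesAt, Fintype.card_piFinset]
  calc _ ≤ ∏ _i : Fin d, 2 := by
        refine Finset.prod_le_prod' fun i _ => ?_
        rw [Int.card_Icc, Int.toNat_le]
        have h1 := Int.floor_le (z i + 1 / 2)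
        have h2 := Int.le_ceil (z i - 1 / 2)
        have h3 : ⌊z i + 1 / 2⌋ ≤ ⌈z i - 1 / 2⌉ + 1 := by
          have : ((⌊z i + 1 / 2⌋ : ℤ) : ℝ) ≤ ((⌈z i - 1 / 2⌉ + 1 : ℤ) : ℝ) := by
            push_cast; linarith
          exact_mod_cast this
        push_cast
        linarith
    _ = 2 ^ d := by simp

lemma round_mem_cubesAt {d : ℕ} (z : Rd d) : (fun i => round (z i)) ∈ cubesAt z :=
  mem_cubesAt.2 fun i => abs_sub_round (z i)

lemma tsum_cubes_eq {d : ℕ} (a : (Fin d → ℤ) → ℝ) (z : Rd d) :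
    (∑' c : Fin d → ℤ, a c * Set.indicator (intCube c) (fun _ => (1 : ℝ)) z) =
      ∑ c ∈ cubesAt z, a c := by
  rw [tsum_eq_sum (s := cubesAt z)]
  · refine Finset.sum_congr rfl fun c hc => ?_
    rw [Set.indicator_of_mem (mem_cubesAt.1 hc), mul_one]
  · intro c hc
    rw [Set.indicator_of_notMem (fun h => hc (mem_cubesAt.2 h)), mul_zero]


/-- The locally constant property: if `supp F̂ ⊆ [-1/2,1/2]^d`, then `|F|` is dominated by
its "discretisation" over lattice unit cubes, which in turn is dominated by `|F| ∗ η` for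
a fixed rapidly decaying mollifier `η`. -/
theorem locally_constant_property (d : ℕ) (hd : 1 ≤ d) :
    ∃ η : Rd d → ℝ, Continuous η ∧ (∀ z, 0 ≤ η z) ∧
      (∃ C : ℝ, 0 < C ∧ ∀ F : SchwartzMap (Rd d) ℂ,
        (Function.support (ftransform fun y => F y) ⊆ {ξ : Rd d | ∀ i, |ξ i| ≤ 1 / 2}) →
        ∀ z : Rd d,
          ‖F z‖ ≤ (∑' c : Fin d → ℤ,
              (⨆ w : intCube c, ‖F (w : Rd d)‖) *
                Set.indicator (intCube c) (fun _ => (1 : ℝ)) z) ∧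
          (∑' c : Fin d → ℤ,
              (⨆ w : intCube c, ‖F (w : Rd d)‖) *
                Set.indicator (intCube c) (fun _ => (1 : ℝ)) z)
            ≤ C * ∫ y : Rd d, ‖F y‖ * η (z - y)) ∧
      (∀ N : ℕ, ∃ CN : ℝ, ∀ z : Rd d,
        η z ≤ CN * (1 + 2 * (⨆ i, |z i|)) ^ (-(N : ℝ))) := by
  obtain ⟨ψ, hψ⟩ := exists_reproducing d
  refine ⟨envelope ψ, envelope_continuous ψ, envelope_nonneg ψ, ⟨2 ^ d, by positivity, ?_⟩,
    envelope_decay ψ⟩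
  intro F hF z
  rw [tsum_cubes_eq (fun c : Fin d → ℤ => ⨆ w : (intCube c : Set (Rd d)), ‖F (w : Rd d)‖) z]
  have hnn : ∀ c : Fin d → ℤ, 0 ≤ ⨆ w : intCube c, ‖F (w : Rd d)‖ :=
    fun c => Real.iSup_nonneg fun w => norm_nonneg _
  have hI : 0 ≤ ∫ y : Rd d, ‖F y‖ * envelope ψ (z - y) :=
    integral_nonneg fun y => mul_nonneg (norm_nonneg _) (envelope_nonneg _ _)
  constructor
  · have hr := round_mem_cubesAt z
    refine le_trans ?_ (Finset.single_le_sum (fun c _ => hnn c) hr)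
    have hbdd : BddAbove (Set.range fun w : intCube (fun i => round (z i)) => ‖F (w : Rd d)‖) := by
      refine ⟨SchwartzMap.seminorm ℝ 0 0 F, ?_⟩
      rintro _ ⟨w, rfl⟩
      exact SchwartzMap.norm_le_seminorm ℝ F _
    exact le_ciSup hbdd ⟨z, mem_cubesAt.1 hr⟩
  · calc _ ≤ ∑ _c ∈ cubesAt z, ∫ y : Rd d, ‖F y‖ * envelope ψ (z - y) := by
          refine Finset.sum_le_sum fun c hc => Real.iSup_le (fun w => ?_) hI
          refine norm_le_envelope_conv (hψ F hF) (norm_le_sqrt fun i => ?_)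
          have h1 := abs_le.1 (mem_cubesAt.1 hc i)
          have h2 := abs_le.1 (w.2 i)
          rw [PiLp.sub_apply, abs_le]
          constructor <;> linarith
      _ = (cubesAt z).card * ∫ y : Rd d, ‖F y‖ * envelope ψ (z - y) := by
          rw [Finset.sum_const, nsmul_eq_mul]
      _ ≤ _ := by
          gcongr
          exact_mod_cast card_cubesAt_le z
end
end

section
/- Let d ≥ 1 and 1 ≤ p ≤ q ≤ ∞. There is a constant C = C(p,q,d) such that whenever F₁,…,F_d ∈ 𝒮(ℝ^d) satisfy supp F̂_j ⊆ [−1/2,1/2]^d for 1 ≤ j ≤ d, the multilinear Bernstein inequality ‖ Π_{j=1}^{d} |F_j|^{1/d} ‖_{L^q(ℝ^d)} ≤ C ‖ Π_{j=1}^{d} |F_j|^{1/d} ‖_{L^p(ℝ^d)} holds. -/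
/-!
The geometric mean `g = ∏ |F_j|^{1/d}` satisfies `g ^ (d * N) = |H|`, where `H = (∏ F_j) ^ N` is a
single Schwartz function whose Fourier transform is supported in a ball of radius depending only on
`d` and `N` (`exists_bandLimited_prod`). Fourier inversion gives `‖H‖_∞ ≤ A ‖H‖_1`, for any `A` at
least the volume of that ball (`BandLimited.enorm_le`), that is, `‖g‖_∞ ^ (d * N) ≤ A ∫ g ^ (d * N)`. If
`p < ∞`, choose `N` with `d * N ≥ p`. Bounding `g ^ (d * N) ≤ ‖g‖_∞ ^ (d * N - p) * g ^ p` under the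
integral and cancelling the finite factor `‖g‖_∞ ^ (d * N - p)` yields `‖g‖_∞ ^ p ≤ A ∫ g ^ p`
(`rpow_le_of_rpow_le`). So the `L^∞` norm of `g` is controlled by its `L^p` norm, and
`∫ g ^ q ≤ ‖g‖_∞ ^ (q - p) ∫ g ^ p` gives the remaining `q` (`eLpNorm_le_of_sup_le`).
Passing to a high power `N` makes it unnecessary to treat `p / d < 1` and `p / d ≥ 1` separately.
-/

open MeasureTheory Filter Metric Complex
open scoped RealInnerProductSpace ENNReal NNReal Classical

noncomputable section

open scoped FourierTransform SchwartzMap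

/-- `F` is band-limited to the ball of radius `R`. The condition is put on the inverse transform in
Mathlib's normalization `∫ e^{2πi x·ξ} F(x) dx`; as balls are symmetric, this is the same as a
condition on the direct transform. -/
def BandLimited {d : ℕ} (F : 𝓢(Rd d, ℂ)) (R : ℝ) : Prop :=
  Function.support (𝓕⁻ F : 𝓢(Rd d, ℂ)) ⊆ closedBall 0 R

lemma fourierInv_eq_ftransform {d : ℕ} (F : 𝓢(Rd d, ℂ)) (ξ : Rd d) :
    (𝓕⁻ F : 𝓢(Rd d, ℂ)) ξ = ftransform (fun y => F y) (-(2 * Real.pi) • ξ) := by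
  rw [SchwartzMap.fourierInv_coe, Real.fourierInv_eq', ftransform]
  congr 1 with x
  rw [smul_eq_mul, inner_smul_right]
  congr 2
  push_cast
  ring

/-- Here the radius `d` is far from optimal: it bounds the Euclidean norm on the cube `[-1, 1]^d`,
which contains `(2π)⁻¹ [-1/2, 1/2]^d`. -/
lemma bandLimited_of_cube {d : ℕ} (F : 𝓢(Rd d, ℂ))
    (h : Function.support (ftransform fun y => F y) ⊆ {ξ : Rd d | ∀ i, |ξ i| ≤ 1 / 2}) :
    BandLimited F d := by
  intro ξ hξ
  rw [Function.mem_support, fourierInv_eq_ftransform] at hξ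
  have h1 := h hξ
  have h2 : ∀ i, ‖ξ i‖ ≤ 1 := by
    intro i
    have h3 := h1 i
    simp only [PiLp.smul_apply, smul_eq_mul, abs_mul, abs_neg, abs_two,
      abs_of_pos Real.pi_pos] at h3
    rw [Real.norm_eq_abs]
    nlinarith [Real.pi_gt_three, abs_nonneg (ξ i)]
  rw [mem_closedBall_zero_iff, EuclideanSpace.norm_eq]
  refine Real.sqrt_le_iff.2 ⟨by positivity, ?_⟩
  calc ∑ i, ‖ξ i‖ ^ 2 ≤ ∑ _i : Fin d, (1 : ℝ) :=
        Finset.sum_le_sum fun i _ => pow_le_one₀ (norm_nonneg _) (h2 i)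
    _ = d := by simp
    _ ≤ (d : ℝ) ^ 2 := by
        rcases Nat.eq_zero_or_pos d with rfl | hd
        · simp
        · have : (1 : ℝ) ≤ d := by exact_mod_cast hd
          nlinarith

/-- The transform of a product is the convolution of the transforms, so frequency radii add. -/
lemma BandLimited.mul {d : ℕ} {F G : 𝓢(Rd d, ℂ)} {R S : ℝ} (hF : BandLimited F R)
    (hG : BandLimited G S) :
    BandLimited (SchwartzMap.pairing (ContinuousLinearMap.mul ℂ ℂ) F G) (R + S) := by
  have key : (𝓕⁻ (SchwartzMap.pairing (ContinuousLinearMap.mul ℂ ℂ) F G) : 𝓢(Rd d, ℂ))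
      = SchwartzMap.convolution (ContinuousLinearMap.mul ℂ ℂ) (𝓕⁻ F) (𝓕⁻ G) := by
    simp [SchwartzMap.convolution]
  intro ξ hξ
  rw [key, Function.mem_support, SchwartzMap.convolution_apply] at hξ
  obtain ⟨a, ha, b, hb, rfl⟩ :=
    support_convolution_subset (ContinuousLinearMap.mul ℂ ℂ) (Function.mem_support.2 hξ)
  have h1 := hF ha
  have h2 := hG hb
  rw [mem_closedBall_zero_iff] at *
  exact (norm_add_le _ _).trans (add_le_add h1 h2)

/-- Nonemptiness is needed because the constant function `1` is not a Schwartz function. -/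
lemma exists_bandLimited_prod {d : ℕ} {ι : Type*} {s : Finset ι} (hs : s.Nonempty)
    (F : ι → 𝓢(Rd d, ℂ)) {R : ℝ} (hF : ∀ i, BandLimited (F i) R) :
    ∃ H : 𝓢(Rd d, ℂ), BandLimited H (s.card * R) ∧ ∀ x, H x = ∏ i ∈ s, F i x := by
  induction hs using Finset.Nonempty.cons_induction with
  | singleton a => exact ⟨F a, by simpa using hF a, by simp⟩
  | cons a s ha hs ih =>
    obtain ⟨H, hH, hHx⟩ := ih
    refine ⟨SchwartzMap.pairing (ContinuousLinearMap.mul ℂ ℂ) (F a) H, ?_, fun x => ?_⟩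
    · have h := (hF a).mul hH
      rw [Finset.card_cons]
      convert h using 1
      push_cast
      ring
    · rw [Finset.prod_cons, ← hHx]
      rfl

/-- The `L¹ → L^∞` Bernstein inequality, by Fourier inversion: the transform is bounded by the
`L¹` norm and lives on a ball. -/
lemma BandLimited.enorm_le {d : ℕ} {H : 𝓢(Rd d, ℂ)} {R : ℝ} (hH : BandLimited H R) (x : Rd d) :
    ‖H x‖ₑ ≤ volume (closedBall (0 : Rd d) R) * ∫⁻ y, ‖H y‖ₑ := by
  have h1 : H x = 𝓕 ((𝓕⁻ H : 𝓢(Rd d, ℂ)) : Rd d → ℂ) x := by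
    rw [← SchwartzMap.fourier_coe, FourierTransform.fourier_fourierInv_eq]
  have h2 : ∀ ξ, ‖(𝓕⁻ H : 𝓢(Rd d, ℂ)) ξ‖ₑ ≤ ∫⁻ y, ‖H y‖ₑ := by
    intro ξ
    rw [SchwartzMap.fourierInv_coe, Real.fourierInv_eq]
    refine (enorm_integral_le_lintegral_enorm _).trans (le_of_eq ?_)
    simp only [← ofReal_norm, Circle.norm_smul]
  calc ‖H x‖ₑ ≤ ∫⁻ ξ, ‖(𝓕⁻ H : 𝓢(Rd d, ℂ)) ξ‖ₑ := by
        rw [h1, Real.fourier_eq]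
        refine (enorm_integral_le_lintegral_enorm _).trans (le_of_eq ?_)
        simp only [← ofReal_norm, Circle.norm_smul]
    _ = ∫⁻ ξ in closedBall (0 : Rd d) R, ‖(𝓕⁻ H : 𝓢(Rd d, ℂ)) ξ‖ₑ := by
        rw [setLIntegral_eq_of_support_subset]
        intro ξ hξ
        exact hH (by simpa using hξ)
    _ ≤ ∫⁻ _ξ in closedBall (0 : Rd d) R, ∫⁻ y, ‖H y‖ₑ := lintegral_mono fun ξ => h2 ξ
    _ = _ := by rw [setLIntegral_const, mul_comm]

/-- Lowering the exponent in a sup bound: an `L^m → L^∞` inequality for a bounded function implies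
the `L^P → L^∞` inequality for every `0 < P ≤ m`, with the same constant. -/
lemma rpow_le_of_rpow_le {X : Type*} [MeasurableSpace X] {μ : Measure X} {a : X → ℝ≥0∞}
    {A K : ℝ≥0∞} {P m : ℝ} (hP : 0 < P) (hPm : P ≤ m) (hK : K ≠ ∞) (haK : ∀ x, a x ≤ K)
    (h : ∀ x, a x ^ m ≤ A * ∫⁻ y, a y ^ m ∂μ) (x : X) :
    a x ^ P ≤ A * ∫⁻ y, a y ^ P ∂μ := by
  set S := ⨆ x, a x with hS
  have haS : ∀ x, a x ≤ S := le_iSup a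
  have hSt : S ≠ ∞ := ne_top_of_le_ne_top hK (iSup_le haK)
  have hm : 0 < m := hP.trans_le hPm
  by_cases hS0 : S = 0
  · have : a x = 0 := le_antisymm (hS0 ▸ haS x) bot_le
    simp [this, hP]
  have hsplit : ∀ s : ℝ≥0∞, s ^ m = s ^ (m - P) * s ^ P := fun s => by
    rw [← ENNReal.rpow_add_of_nonneg _ _ (by linarith) hP.le]; simp
  have hfin : S ^ (m - P) ≠ ∞ := ENNReal.rpow_ne_top_of_nonneg (by linarith) hSt
  have hne : S ^ (m - P) ≠ 0 := (ENNReal.rpow_pos (pos_iff_ne_zero.2 hS0) hSt).ne'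
  have h1 : ∫⁻ y, a y ^ m ∂μ ≤ S ^ (m - P) * ∫⁻ y, a y ^ P ∂μ := by
    rw [← lintegral_const_mul' _ _ hfin]
    refine lintegral_mono fun y => ?_
    rw [hsplit]
    gcongr
    exact haS y
  have h2 : S ^ m ≤ A * ∫⁻ y, a y ^ m ∂μ := by
    rw [← ENNReal.le_rpow_inv_iff hm]
    exact iSup_le fun x => (ENNReal.le_rpow_inv_iff hm).2 (h x)
  have h3 : S ^ (m - P) * S ^ P ≤ S ^ (m - P) * (A * ∫⁻ y, a y ^ P ∂μ) := by
    rw [← hsplit]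
    calc S ^ m ≤ A * (S ^ (m - P) * ∫⁻ y, a y ^ P ∂μ) := h2.trans (by gcongr)
      _ = _ := by ring
  exact (ENNReal.rpow_le_rpow (haS x) hP.le).trans ((ENNReal.mul_le_mul_iff_right hne hfin).1 h3)

/-- A bound of the sup norm by the `L^p` norm upgrades to `L^q` for all `q ≥ p`. -/
lemma eLpNorm_le_of_sup_le {X : Type*} [MeasurableSpace X] {μ : Measure X} {g : X → ℝ}
    {A p q : ℝ≥0∞} (hA : 1 ≤ A) (hp : 1 ≤ p) (hp' : p ≠ ∞) (hpq : p ≤ q)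
    (h : ∀ x, ‖g x‖ₑ ^ p.toReal ≤ A * ∫⁻ y, ‖g y‖ₑ ^ p.toReal ∂μ) :
    eLpNorm g q μ ≤ A * eLpNorm g p μ := by
  have hp0 : p ≠ 0 := (zero_lt_one.trans_le hp).ne'
  have hP1 : 1 ≤ p.toReal := by
    simpa using (ENNReal.toReal_le_toReal ENNReal.one_ne_top hp').2 hp
  have hP : 0 < p.toReal := by linarith
  have hI : ∫⁻ y, ‖g y‖ₑ ^ p.toReal ∂μ = eLpNorm g p μ ^ p.toReal := by
    rw [eLpNorm_eq_lintegral_rpow_enorm_toReal hp0 hp', one_div, ENNReal.rpow_inv_rpow hP.ne']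
  set B := A * eLpNorm g p μ with hB
  have hgB : eLpNorm g p μ ≤ B := le_mul_of_one_le_left bot_le hA
  have hsup : ∀ x, ‖g x‖ₑ ≤ B := by
    intro x
    rw [← ENNReal.rpow_le_rpow_iff hP, hB, ENNReal.mul_rpow_of_nonneg _ _ hP.le, ← hI]
    refine (h x).trans ?_
    gcongr
    calc A = A ^ (1 : ℝ) := by simp
      _ ≤ A ^ p.toReal := ENNReal.rpow_le_rpow_of_exponent_le hA hP1
  by_cases hq : q = ∞
  · rw [hq, eLpNorm_exponent_top]
    exact eLpNormEssSup_le_of_ae_enorm_bound (.of_forall hsup)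
  have hq0 : q ≠ 0 := (zero_lt_one.trans_le (hp.trans hpq)).ne'
  have hPQ : p.toReal ≤ q.toReal := (ENNReal.toReal_le_toReal hp' hq).2 hpq
  have hQ : 0 < q.toReal := by linarith
  by_cases hBt : B = ∞
  · simp [hBt]
  have hfin : B ^ (q.toReal - p.toReal) ≠ ∞ :=
    ENNReal.rpow_ne_top_of_nonneg (by linarith) hBt
  have hsplit : ∀ s : ℝ≥0∞, s ^ q.toReal = s ^ (q.toReal - p.toReal) * s ^ p.toReal := fun s => by
    rw [← ENNReal.rpow_add_of_nonneg _ _ (by linarith) hP.le]; simp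
  rw [eLpNorm_eq_lintegral_rpow_enorm_toReal hq0 hq, one_div, ENNReal.rpow_inv_le_iff hQ]
  calc ∫⁻ y, ‖g y‖ₑ ^ q.toReal ∂μ
      ≤ ∫⁻ y, B ^ (q.toReal - p.toReal) * ‖g y‖ₑ ^ p.toReal ∂μ := by
        refine lintegral_mono fun y => ?_
        rw [hsplit]
        gcongr
        exact hsup y
    _ = B ^ (q.toReal - p.toReal) * eLpNorm g p μ ^ p.toReal := by
        rw [lintegral_const_mul' _ _ hfin, hI]
    _ ≤ B ^ (q.toReal - p.toReal) * B ^ p.toReal := by gcongr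
    _ = B ^ q.toReal := (hsplit B).symm

/-- The multilinear Bernstein inequality: for `F₁,…,F_d` Schwartz with Fourier support in
the unit cube, `‖Π |F_j|^{1/d}‖_{L^q} ≤ C ‖Π |F_j|^{1/d}‖_{L^p}` for `1 ≤ p ≤ q ≤ ∞`. -/
theorem multilinear_bernstein (d : ℕ) (hd : 1 ≤ d)
    (p q : ℝ≥0∞) (hp : 1 ≤ p) (hpq : p ≤ q) :
    ∃ C : ℝ, 0 < C ∧
      ∀ F : Fin d → SchwartzMap (Rd d) ℂ,
        (∀ j, Function.support (ftransform fun y => F j y) ⊆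
          {ξ : Rd d | ∀ i, |ξ i| ≤ 1 / 2}) →
        eLpNorm (fun z : Rd d => ∏ j, ‖F j z‖ ^ ((1 : ℝ) / d)) q volume
          ≤ ENNReal.ofReal C *
              eLpNorm (fun z : Rd d => ∏ j, ‖F j z‖ ^ ((1 : ℝ) / d)) p volume := by
  by_cases hp' : p = ∞
  · obtain rfl : q = p := by rw [hp'] at hpq ⊢; exact top_le_iff.1 hpq
    exact ⟨1, one_pos, fun F _ => by simp⟩
  have hP : 0 < p.toReal := ENNReal.toReal_pos (zero_lt_one.trans_le hp).ne' hp'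
  have hd0 : (d : ℝ) ≠ 0 := by positivity
  have hd1 : (1 : ℝ) ≤ d := by exact_mod_cast hd
  set N : ℕ := ⌈p.toReal⌉₊ + 1 with hN
  have hPm : p.toReal ≤ ((d * N : ℕ) : ℝ) := by
    have h1 : p.toReal ≤ N := (Nat.le_ceil _).trans (by simp [hN])
    push_cast
    nlinarith
  set V : ℝ≥0∞ := volume (closedBall (0 : Rd d) ((d * N : ℕ) * d)) with hV
  have hVt : V ≠ ∞ := measure_closedBall_lt_top.ne
  -- The summand `1` makes the constant at least `1`, so that `A ≤ A ^ p`.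
  set A : ℝ≥0∞ := V + 1 with hAdef
  have hAt : A ≠ ∞ := ENNReal.add_ne_top.2 ⟨hVt, ENNReal.one_ne_top⟩
  have hA1 : 1 ≤ A := le_add_self
  refine ⟨A.toReal, ENNReal.toReal_pos (zero_lt_one.trans_le hA1).ne' hAt, fun F hF => ?_⟩
  rw [ENNReal.ofReal_toReal hAt]
  set g : Rd d → ℝ := fun z => ∏ j, ‖F j z‖ ^ ((1 : ℝ) / d) with hg
  have hg0 : ∀ z, 0 ≤ g z := fun z => Finset.prod_nonneg fun j _ => by positivity
  have : Nonempty (Fin d) := ⟨⟨0, hd⟩⟩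
  have : Nonempty (Fin N) := ⟨⟨0, by omega⟩⟩
  obtain ⟨H, hH, hHx⟩ := exists_bandLimited_prod (s := (Finset.univ : Finset (Fin d × Fin N)))
    Finset.univ_nonempty (fun i => F i.1) fun i => bandLimited_of_cube _ (hF i.1)
  have hcard : (Finset.univ : Finset (Fin d × Fin N)).card = d * N := by simp
  rw [hcard] at hH
  have hgH : ∀ z, ‖g z‖ₑ ^ ((d * N : ℕ) : ℝ) = ‖H z‖ₑ := by
    intro z
    have h1 : g z ^ (d * N) = ‖H z‖ := by
      rw [hHx, Fintype.prod_prod_type, norm_prod, pow_mul, hg]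
      simp only [Finset.prod_const, Finset.card_univ, Fintype.card_fin, norm_pow]
      rw [← Finset.prod_pow, ← Finset.prod_pow]
      refine Finset.prod_congr rfl fun j _ => ?_
      rw [← Real.rpow_natCast (‖F j z‖ ^ ((1 : ℝ) / d)), ← Real.rpow_mul (norm_nonneg _),
        one_div_mul_cancel hd0, Real.rpow_one]
    rw [ENNReal.rpow_natCast, ← enorm_pow, h1, enorm_norm]
  obtain ⟨K, hK⟩ : ∃ K : ℝ, ∀ z, ‖H z‖ ≤ K :=
    ⟨_, fun z => H.toBoundedContinuousFunction.norm_coe_le_norm z⟩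
  have hm : 0 < ((d * N : ℕ) : ℝ) := hP.trans_le hPm
  refine eLpNorm_le_of_sup_le hA1 hp hp' hpq
    (rpow_le_of_rpow_le (K := ENNReal.ofReal K ^ ((d * N : ℕ) : ℝ)⁻¹) hP hPm ?_ ?_ ?_)
  · exact ENNReal.rpow_ne_top_of_nonneg (by positivity) ENNReal.ofReal_ne_top
  · intro z
    rw [ENNReal.le_rpow_inv_iff hm, hgH, ← ofReal_norm]
    exact ENNReal.ofReal_le_ofReal (hK z)
  · intro z
    simp_rw [hgH]
    refine (hH.enorm_le z).trans ?_
    gcongr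
    exact le_self_add
end
end

section
/- Let 0 < s ≤ 1, M ≥ 1, and d ≥ 1. There exists a function η_M : ℝ^d → [0,∞) and a constant C = C(d,s) such that: (i) whenever F ∈ 𝒮(ℝ^d) satisfies supp F̂ ⊆ [−1/2,1/2]^d, one has |F(z)|^s ≤ Σ_{Q ∈ 𝒬_{M,all}} a_Q^s χ_Q(z) ≤ C M^d (|F|^s ∗ η_M)(z) for all z ∈ ℝ^d, where 𝒬_{M,all} is the collection of all lattice M-cubes in ℝ^d and a_Q := sup_{w ∈ Q} |F(w)|; and (ii) for every N ∈ ℕ there is a constant C_{N,s} with η_M(z) ≤ C_{N,s} M^{−d} (1 + 2M^{−1}|z|_∞)^{−N} for all z ∈ ℝ^d. -/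
/-!
The heart of the matter is a pointwise bound with a rapidly decreasing kernel at unit scale:
`|F(w)|^s ≤ V ∫ |F(y)|^s |G(y - w)|^s dy` for band-limited `F`, with one fixed Schwartz function `G`
(`exists_kernel`).

Take `G = ĝ` with `g` a smooth bump supported in the unit ball and `∫ g = 1`, so that `G(0) = 1`.
For fixed `w` the product `H(y) = F(y) G(y - w)` satisfies `H(w) = F(w)` and still has Fourier
transform supported in a fixed ball (`fourier_mul_eq_zero`). A function `H` of this kind obeys
`‖H‖_∞ ≤ ‖Ĥ‖_1 ≤ V ‖Ĥ‖_∞ ≤ V ‖H‖_1`, where `V` is the volume of the ball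
(`norm_le_of_fourier_support`). Since `‖H‖_1 ≤ ‖H‖_∞^{1-s} ∫ |H|^s` and `‖H‖_∞` is finite, this
self-improves to the Nikolskii inequality `‖H‖_∞^s ≤ V ∫ |H|^s`
(`rpow_norm_le_of_fourier_support`), which at the point `w` is the claimed bound. Multiplying by `G`
rather than using a reproducing formula gives decay of every order with one kernel even for `s < 1`.

To pass to scale `M ≥ 1`, dominate `|G|^s` by `Φ(‖·‖)` with `Φ` decreasing and rapidly decaying
(`exists_majorant`), and put `η_M(z) = M^{-d} Φ(‖z‖ / M - d)`. For `z`, `w` in the same `M`-cube,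
`‖z - w‖ ≤ d M`, hence `‖z - y‖ / M - d ≤ ‖y - w‖`, and so `|G(y - w)|^s ≤ M^d η_M(z - y)`.
Finally each point lies in at least one and at most `2^d` of the closed cubes (`sum_cubes_le`).
-/

open MeasureTheory Filter Metric Complex
open scoped RealInnerProductSpace ENNReal NNReal Classical

noncomputable section

/-- The lattice `M`-cube in `ℝ^d` centred at the lattice point `M·c`. -/
def latticeMCube {d : ℕ} (M : ℝ) (c : Fin d → ℤ) : Set (Rd d) :=
  {z | ∀ i, |z i - M * (c i : ℝ)| ≤ M / 2}

open scoped FourierTransform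

theorem fourier_modulate {d : ℕ} (g : Rd d → ℂ) (w x : Rd d) :
    𝓕 (fun v : Rd d => cexp (↑(2 * Real.pi * ⟪v, w⟫) * I) * g v) x = 𝓕 g (x - w) := by
  rw [Real.fourier_eq', Real.fourier_eq']
  congr 1
  ext v
  rw [smul_eq_mul, smul_eq_mul, ← mul_assoc, ← Complex.exp_add, inner_sub_right]
  congr 2
  push_cast
  ring

theorem integrable_modulate {d : ℕ} {g : Rd d → ℂ} (hg : Integrable g) (w : Rd d) :
    Integrable (fun v : Rd d => cexp (↑(2 * Real.pi * ⟪v, w⟫) * I) * g v) := by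
  refine hg.mono ?_ (Eventually.of_forall fun v => ?_)
  · refine AEStronglyMeasurable.mul (Continuous.aestronglyMeasurable ?_) hg.1
    fun_prop
  · rw [norm_mul, Complex.norm_exp_ofReal_mul_I, one_mul]

/-- If `F̂` vanishes off the ball of radius `R` and `g` vanishes off the unit ball, then the Fourier
transform of `x ↦ F x * ĝ (x - w)` vanishes off the ball of radius `R + 1`: by the multiplication
formula it equals `∫ g(η) e^{2πi⟪η, w⟫} F̂(η + ξ) dη`. -/
theorem fourier_mul_eq_zero {d : ℕ} {F g : Rd d → ℂ} (hF : Integrable F) (hg : Integrable g)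
    {R : ℝ} (hFR : ∀ ξ, R < ‖ξ‖ → 𝓕 F ξ = 0) (hgR : ∀ η, 1 < ‖η‖ → g η = 0)
    (w ξ : Rd d) (hξ : R + 1 < ‖ξ‖) :
    𝓕 (fun x : Rd d => F x * 𝓕 g (x - w)) ξ = 0 := by
  have key := VectorFourier.integral_fourierIntegral_smul_eq_flip (e := Real.fourierChar)
    (L := innerₗ (Rd d)) (μ := volume) (ν := volume) Real.continuous_fourierChar
    continuous_inner (integrable_modulate hg w) (integrable_modulate hF (-ξ))
  rw [flip_innerₗ] at key
  change ∫ x, 𝓕 (fun v : Rd d => cexp (↑(2 * Real.pi * ⟪v, w⟫) * I) * g v) x • _ =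
    ∫ x, _ • 𝓕 (fun v : Rd d => cexp (↑(2 * Real.pi * ⟪v, -ξ⟫) * I) * F v) x at key
  simp only [fourier_modulate] at key
  have h0 : ∀ x : Rd d, (cexp (↑(2 * Real.pi * ⟪x, w⟫) * I) * g x) • 𝓕 F (x - -ξ) = 0 := by
    intro x
    by_cases hx : 1 < ‖x‖
    · simp [hgR x hx]
    · rw [hFR, smul_zero]
      have := norm_sub_norm_le ξ (-x)
      rw [norm_neg, sub_neg_eq_add, add_comm] at this
      rw [sub_neg_eq_add]
      linarith
  simp only [h0, integral_zero] at key
  rw [Real.fourier_eq', ← key]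
  congr 1
  ext x
  simp only [smul_eq_mul, inner_neg_right]
  rw [show ((-2 * Real.pi * ⟪x, ξ⟫ : ℝ)) = 2 * Real.pi * -⟪x, ξ⟫ by ring]
  ring

/-- The `L¹`–`L^∞` Nikolskii inequality, from Fourier inversion and `‖Ĥ‖_∞ ≤ ‖H‖_1`. -/
theorem norm_le_of_fourier_support {d : ℕ} {H : Rd d → ℂ} (hc : Continuous H)
    (hi : Integrable H) {R : ℝ} (hR : ∀ ξ, R < ‖ξ‖ → 𝓕 H ξ = 0) (x : Rd d) :
    ‖H x‖ ≤ volume.real (closedBall (0 : Rd d) R) * ∫ y, ‖H y‖ := by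
  have hb : ∀ ξ, ‖𝓕 H ξ‖ ≤ ∫ y, ‖H y‖ := fun ξ =>
    VectorFourier.norm_fourierIntegral_le_integral_norm _ _ _ _ _
  have hcont : Continuous (𝓕 H) :=
    VectorFourier.fourierIntegral_continuous Real.continuous_fourierChar continuous_inner hi
  have hsupp : Function.support (𝓕 H) ⊆ closedBall 0 R := by
    intro ξ hξ
    rw [mem_closedBall_zero_iff]
    by_contra h
    exact hξ (hR ξ (not_le.mp h))
  have hint : Integrable (𝓕 H) := by
    refine hcont.integrable_of_hasCompactSupport ?_
    exact HasCompactSupport.intro (isCompact_closedBall 0 R)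
      fun ξ hξ => by_contra fun h => hξ (hsupp h)
  have hinv : H x = 𝓕⁻ (𝓕 H) x := by rw [hc.fourierInv_fourier_eq hi hint]
  rw [hinv, Real.fourierInv_eq']
  calc _ ≤ ∫ ξ, ‖𝓕 H ξ‖ := by
        refine (norm_integral_le_integral_norm _).trans (le_of_eq ?_)
        congr 1
        ext ξ
        rw [norm_smul, Complex.norm_exp_ofReal_mul_I, one_mul]
    _ = ∫ ξ in closedBall (0 : Rd d) R, ‖𝓕 H ξ‖ := by
        rw [setIntegral_eq_integral_of_forall_compl_eq_zero]
        intro ξ hξ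
        rw [norm_eq_zero]
        by_contra h
        exact hξ (hsupp h)
    _ ≤ ∫ ξ in closedBall (0 : Rd d) R, ∫ y, ‖H y‖ := by
        refine integral_mono hint.norm.integrableOn ?_ hb
        exact integrableOn_const measure_closedBall_lt_top.ne
    _ = _ := by rw [setIntegral_const, smul_eq_mul]

/-- The `L^s`–`L^∞` Nikolskii inequality for `s ≤ 1`. The value of the bound `B` is irrelevant, but
finiteness of `sup ‖H‖` is needed in order to divide by a power of it. -/
theorem rpow_norm_le_of_fourier_support {d : ℕ} {H : Rd d → ℂ} (hc : Continuous H)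
    (hi : Integrable H) {B : ℝ} (hB : ∀ x, ‖H x‖ ≤ B) {s : ℝ} (hs0 : 0 < s) (hs1 : s ≤ 1)
    (his : Integrable fun y => ‖H y‖ ^ s)
    {R : ℝ} (hR : ∀ ξ, R < ‖ξ‖ → 𝓕 H ξ = 0) (x : Rd d) :
    ‖H x‖ ^ s ≤ volume.real (closedBall (0 : Rd d) R) * ∫ y, ‖H y‖ ^ s := by
  set V := volume.real (closedBall (0 : Rd d) R)
  set J := ∫ y, ‖H y‖ ^ s
  have hV : 0 ≤ V := measureReal_nonneg
  have hJ : 0 ≤ J := integral_nonneg fun y => by positivity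
  have hbdd : BddAbove (Set.range fun y => ‖H y‖) := ⟨B, by rintro _ ⟨y, rfl⟩; exact hB y⟩
  set A := ⨆ y, ‖H y‖
  have hA : ∀ y, ‖H y‖ ≤ A := fun y => le_ciSup hbdd y
  have hA0 : 0 ≤ A := (norm_nonneg _).trans (hA 0)
  rcases hA0.eq_or_lt with h0 | hpos
  · have : ‖H x‖ = 0 := le_antisymm (h0 ▸ hA x) (norm_nonneg _)
    rw [this, Real.zero_rpow hs0.ne']
    positivity
  -- Interpolate `‖H‖ = ‖H‖ ^ (1 - s) * ‖H‖ ^ s ≤ A ^ (1 - s) * ‖H‖ ^ s` under the integral.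
  have h1 : ∫ y, ‖H y‖ ≤ A ^ (1 - s) * J := by
    rw [← integral_const_mul]
    refine integral_mono hi.norm (his.const_mul _) fun y => ?_
    have h := Real.rpow_add_of_nonneg (norm_nonneg (H y)) (sub_nonneg.2 hs1) hs0.le
    rw [sub_add_cancel, Real.rpow_one] at h
    calc ‖H y‖ = ‖H y‖ ^ (1 - s) * ‖H y‖ ^ s := h
      _ ≤ A ^ (1 - s) * ‖H y‖ ^ s := by
        gcongr
        exact hA y
  have h2 : A ≤ V * (A ^ (1 - s) * J) :=
    ciSup_le fun y => (norm_le_of_fourier_support hc hi hR y).trans (by gcongr)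
  have h3 : A ^ s ≤ V * J := by
    have e : A = A ^ (1 - s) * A ^ s := by
      rw [← Real.rpow_add hpos, sub_add_cancel, Real.rpow_one]
    have hp : 0 < A ^ (1 - s) := Real.rpow_pos_of_pos hpos _
    refine le_of_mul_le_mul_left ?_ hp
    calc _ = A := e.symm
      _ ≤ _ := h2
      _ = _ := by ring
  exact (Real.rpow_le_rpow (norm_nonneg _) (hA x) hs0.le).trans h3

theorem schwartz_rpow_decay {d : ℕ} (G : SchwartzMap (Rd d) ℂ) {s : ℝ} (hs : 0 < s) (N : ℕ) :
    ∃ K : ℝ, 0 ≤ K ∧ ∀ x, ‖G x‖ ^ s ≤ K * (1 + ‖x‖) ^ (-(N : ℝ)) := by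
  obtain ⟨k, hk⟩ := exists_nat_ge ((N : ℝ) / s)
  set D := 2 ^ k * (Finset.Iic (k, 0)).sup (fun m => SchwartzMap.seminorm ℝ m.1 m.2) G with hDdef
  have hD : ∀ x, (1 + ‖x‖) ^ k * ‖G x‖ ≤ D := fun x => by
    simpa using SchwartzMap.one_add_le_sup_seminorm_apply (𝕜 := ℝ) (m := (k, 0)) (k := k)
      (n := 0) le_rfl le_rfl G x
  have hD0 : 0 ≤ D := le_trans (by positivity) (hD 0)
  refine ⟨D ^ s, by positivity, fun x => ?_⟩
  have h1 : (1 : ℝ) ≤ 1 + ‖x‖ := by linarith [norm_nonneg x]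
  have h0 : (0 : ℝ) < 1 + ‖x‖ := by linarith
  rw [Real.rpow_neg h0.le, ← div_eq_mul_inv, le_div_iff₀ (by positivity)]
  have hNk : (N : ℝ) ≤ k * s := (div_le_iff₀ hs).1 hk
  calc ‖G x‖ ^ s * (1 + ‖x‖) ^ (N : ℝ) ≤ ‖G x‖ ^ s * (1 + ‖x‖) ^ (k * s) := by
        gcongr
    _ = ((1 + ‖x‖) ^ k * ‖G x‖) ^ s := by
        rw [Real.mul_rpow (by positivity) (norm_nonneg _), Real.rpow_mul h0.le,
          Real.rpow_natCast, mul_comm]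
    _ ≤ D ^ s := Real.rpow_le_rpow (by positivity) (hD x) hs.le

theorem schwartz_rpow_integrable {d : ℕ} (G : SchwartzMap (Rd d) ℂ) {s : ℝ} (hs : 0 < s) :
    Integrable fun x => ‖G x‖ ^ s := by
  obtain ⟨K, -, hK⟩ := schwartz_rpow_decay G hs (d + 1)
  have hi : Integrable (fun x : Rd d => (1 + ‖x‖) ^ (-((d + 1 : ℕ) : ℝ))) :=
    integrable_one_add_norm (by simp)
  refine (hi.const_mul K).mono' ?_ (Eventually.of_forall fun x => ?_)
  · exact (G.continuous.norm.rpow_const fun _ => Or.inr hs.le).aestronglyMeasurable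
  · rw [Real.norm_of_nonneg (by positivity)]
    exact hK x

theorem norm_le_of_coord {d : ℕ} (z : Rd d) {B : ℝ} (hB : 0 ≤ B) (h : ∀ i, |z i| ≤ B) :
    ‖z‖ ≤ d * B := by
  rw [EuclideanSpace.norm_eq]
  refine Real.sqrt_le_iff.2 ⟨by positivity, ?_⟩
  calc ∑ i, ‖z i‖ ^ 2 ≤ ∑ _i : Fin d, B ^ 2 := by
        refine Finset.sum_le_sum fun i _ => ?_
        rw [Real.norm_eq_abs]
        exact pow_le_pow_left₀ (abs_nonneg _) (h i) 2
    _ = d * B ^ 2 := by simp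
    _ ≤ (d * B) ^ 2 := by
        rw [mul_pow]
        gcongr
        exact_mod_cast Nat.le_self_pow two_ne_zero d

/-- Translation to Mathlib's normalisation `𝓕 F ξ = ∫ e^{-2πi⟪x, ξ⟫} F x dx`. The cube shrinks by a
factor `2π`; the ball of radius `d` is a crude enlargement of it. -/
theorem fourier_eq_zero_of_support {d : ℕ} {F : Rd d → ℂ}
    (hF : Function.support (ftransform F) ⊆ {ξ : Rd d | ∀ i, |ξ i| ≤ 1 / 2})
    (ξ : Rd d) (hξ : (d : ℝ) < ‖ξ‖) : 𝓕 F ξ = 0 := by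
  have e : 𝓕 F ξ = ftransform F ((2 * Real.pi) • ξ) := by
    rw [Real.fourier_eq', ftransform]
    congr 1
    ext x
    rw [smul_eq_mul, inner_smul_right]
    congr 2
    push_cast
    ring
  rw [e]
  by_contra h
  have h' := hF h
  refine absurd hξ (not_lt.2 ?_)
  rw [← mul_one (d : ℝ)]
  refine norm_le_of_coord ξ zero_le_one fun i => ?_
  have hi := h' i
  rw [PiLp.smul_apply, smul_eq_mul, abs_mul, abs_of_pos (by positivity)] at hi
  have := Real.pi_gt_three
  nlinarith [abs_nonneg (ξ i)]

/-- A Schwartz function `G` with `G 0 = 1` whose (inverse) Fourier transform `g` lives in the unit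
ball. -/
theorem exists_bandlimited (d : ℕ) : ∃ g : Rd d → ℂ, Integrable g ∧
    (∀ η, 1 < ‖η‖ → g η = 0) ∧ ∃ G : SchwartzMap (Rd d) ℂ, (⇑G = 𝓕 g) ∧ G 0 = 1 := by
  let b : ContDiffBump (0 : Rd d) := ⟨1 / 2, 1, by norm_num, by norm_num⟩
  let g : Rd d → ℂ := fun x => ((b.normed volume x : ℝ) : ℂ)
  have hgc : HasCompactSupport g := b.hasCompactSupport_normed.comp_left (g := Complex.ofReal) rfl
  have hgs : ContDiff ℝ (⊤ : ℕ∞) g := Complex.ofRealCLM.contDiff.comp b.contDiff_normed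
  refine ⟨g, b.integrable_normed.ofReal, fun η hη => ?_, 𝓕 (hgc.toSchwartzMap hgs), rfl, ?_⟩
  · have : b.normed volume η = 0 := by
      by_contra h
      have h2 : η ∈ Function.support (b.normed volume) := h
      rw [b.support_normed_eq, mem_ball_zero_iff] at h2
      exact absurd h2 (not_lt.2 hη.le)
    simp [g, this]
  · change 𝓕 g 0 = 1
    rw [Real.fourier_eq']
    simp only [inner_zero_right, mul_zero, ofReal_zero, zero_mul, Complex.exp_zero, one_smul, g]
    rw [integral_complex_ofReal, b.integral_normed, ofReal_one]

/-- Unit-scale form of the locally constant property, with a kernel independent of `F`. -/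
theorem exists_kernel (d : ℕ) {s : ℝ} (hs0 : 0 < s) (hs1 : s ≤ 1) :
    ∃ V : ℝ, 0 ≤ V ∧ ∃ G : SchwartzMap (Rd d) ℂ, ∀ F : SchwartzMap (Rd d) ℂ,
      (Function.support (ftransform fun y => F y) ⊆ {ξ : Rd d | ∀ i, |ξ i| ≤ 1 / 2}) →
      ∀ w, ‖F w‖ ^ s ≤ V * ∫ y, ‖F y‖ ^ s * ‖G (y - w)‖ ^ s := by
  obtain ⟨g, hg, hgR, G, hG, hG0⟩ := exists_bandlimited d
  refine ⟨volume.real (closedBall (0 : Rd d) (d + 1)), measureReal_nonneg, G, fun F hF w => ?_⟩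
  obtain ⟨K, hK0, hK⟩ := G.toBoundedContinuousFunction.isBounded_range.exists_pos_norm_le
  obtain ⟨L, hL0, hL⟩ := F.toBoundedContinuousFunction.isBounded_range.exists_pos_norm_le
  have hK : ∀ x, ‖G x‖ ≤ K := fun x => hK _ ⟨x, rfl⟩
  have hL : ∀ x, ‖F x‖ ≤ L := fun x => hL _ ⟨x, rfl⟩
  have hGw : Continuous fun y => G (y - w) := G.continuous.comp (continuous_id.sub continuous_const)
  have hc : Continuous fun y => F y * G (y - w) := F.continuous.mul hGw
  have hi : Integrable fun y => F y * G (y - w) :=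
    F.integrable.mul_bdd hGw.aestronglyMeasurable (Eventually.of_forall fun y => hK _)
  have his : Integrable fun y => ‖F y * G (y - w)‖ ^ s := by
    refine ((schwartz_rpow_integrable F hs0).mul_const (K ^ s)).mono'
      (hc.norm.rpow_const fun _ => Or.inr hs0.le).aestronglyMeasurable
      (Eventually.of_forall fun y => ?_)
    rw [Real.norm_of_nonneg (by positivity), norm_mul,
      Real.mul_rpow (norm_nonneg _) (norm_nonneg _)]
    gcongr
    exact hK _
  have h := rpow_norm_le_of_fourier_support (R := d + 1) hc hi (B := L * K)
    (fun y => by rw [norm_mul]; gcongr; exacts [hL y, hK _]) hs0 hs1 his (fun ξ hξ => by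
      rw [hG]
      exact fourier_mul_eq_zero F.integrable hg (fourier_eq_zero_of_support hF) hgR w ξ hξ) w
  simpa only [sub_self, hG0, mul_one, norm_mul,
    Real.mul_rpow (norm_nonneg _) (norm_nonneg _)] using h

/-- A decreasing majorant of `‖G‖ ^ s` in the variable `‖x‖`, decaying faster than every power.
It is the infimum over `N` of the bounds of order `N`; monotonicity makes it measurable. -/
theorem exists_majorant {d : ℕ} (G : SchwartzMap (Rd d) ℂ) {s : ℝ} (hs : 0 < s) :
    ∃ K : ℕ → ℝ, (∀ N, 0 ≤ K N) ∧ ∃ Φ : ℝ → ℝ, Antitone Φ ∧ (∀ r, 0 ≤ Φ r) ∧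
      (∀ x, ‖G x‖ ^ s ≤ Φ ‖x‖) ∧ ∀ N r, Φ r ≤ K N * (1 + max r 0) ^ (-(N : ℝ)) := by
  choose K hK0 hK using schwartz_rpow_decay G hs
  have hbdd : ∀ r : ℝ, BddBelow (Set.range fun N => K N * (1 + max r 0) ^ (-(N : ℝ))) :=
    fun r => ⟨0, by rintro _ ⟨N, rfl⟩; exact mul_nonneg (hK0 N) (by positivity)⟩
  refine ⟨K, hK0, fun r => ⨅ N, K N * (1 + max r 0) ^ (-(N : ℝ)), ?_, ?_, ?_, ?_⟩
  · intro r t hrt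
    refine ciInf_mono (hbdd t) fun N => ?_
    refine mul_le_mul_of_nonneg_left ?_ (hK0 N)
    exact Real.rpow_le_rpow_of_nonpos (by positivity) (by gcongr) (by simp)
  · intro r
    exact le_ciInf fun N => mul_nonneg (hK0 N) (by positivity)
  · intro x
    refine le_ciInf fun N => ?_
    rw [max_eq_left (norm_nonneg x)]
    exact hK N x
  · intro N r
    exact ciInf_le (hbdd r) N

/-- A weighted sum of indicators of lattice cubes, evaluated at `z`, has between `1` and `2 ^ d`
non-zero terms: the cubes are closed, so each coordinate leaves at most two choices. -/
theorem sum_cubes_le {d : ℕ} {M : ℝ} (hM : 0 < M) (z : Rd d) (a : (Fin d → ℤ) → ℝ) {X : ℝ}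
    (hX : 0 ≤ X) (ha0 : ∀ c, 0 ≤ a c) (ha : ∀ c, z ∈ latticeMCube M c → a c ≤ X)
    {b : ℝ} (hb : ∀ c, z ∈ latticeMCube M c → b ≤ a c) :
    b ≤ ∑' c, a c * Set.indicator (latticeMCube M c) (fun _ => (1 : ℝ)) z ∧
    ∑' c, a c * Set.indicator (latticeMCube M c) (fun _ => (1 : ℝ)) z ≤ 2 ^ d * X := by
  let S : Finset (Fin d → ℤ) :=
    Fintype.piFinset fun i => Finset.Icc ⌈z i / M - 1 / 2⌉ ⌊z i / M + 1 / 2⌋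
  have hS : ∀ c, z ∈ latticeMCube M c ↔ c ∈ S := by
    intro c
    simp only [S, Fintype.mem_piFinset, Finset.mem_Icc, latticeMCube, Set.mem_ofPred_eq,
      Int.ceil_le, Int.le_floor]
    refine forall_congr' fun i => ?_
    rw [abs_le, sub_le_iff_le_add, ← sub_le_iff_le_add', div_add' _ _ _ hM.ne',
      div_sub' hM.ne', div_le_iff₀ hM, le_div_iff₀ hM]
    constructor <;> rintro ⟨h1, h2⟩ <;> constructor <;> linarith
  have hcard : (S.card : ℝ) ≤ 2 ^ d := by
    rw [Fintype.card_piFinset]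
    have : ∀ i : Fin d, (Finset.Icc ⌈z i / M - 1 / 2⌉ ⌊z i / M + 1 / 2⌋).card ≤ 2 := by
      intro i
      rw [Int.card_Icc]
      have h1 := Int.le_ceil (z i / M - 1 / 2)
      have h2 := Int.floor_le (z i / M + 1 / 2)
      have h3 : ((⌊z i / M + 1 / 2⌋ : ℤ) : ℝ) ≤ ((⌈z i / M - 1 / 2⌉ + 1 : ℤ) : ℝ) := by
        push_cast
        linarith
      have h4 : ⌊z i / M + 1 / 2⌋ ≤ ⌈z i / M - 1 / 2⌉ + 1 := by exact_mod_cast h3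
      omega
    have h := Finset.prod_le_prod' (s := (Finset.univ : Finset (Fin d))) fun i _ => this i
    rw [Finset.prod_const, Finset.card_univ, Fintype.card_fin] at h
    exact_mod_cast h
  have hsum : ∑' c, a c * Set.indicator (latticeMCube M c) (fun _ => (1 : ℝ)) z
      = ∑ c ∈ S, a c := by
    rw [tsum_eq_sum (s := S)]
    · refine Finset.sum_congr rfl fun c hc => ?_
      rw [Set.indicator_of_mem ((hS c).2 hc), mul_one]
    · intro c hc
      rw [Set.indicator_of_notMem fun h => hc ((hS c).1 h), mul_zero]
  rw [hsum]
  constructor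
  · have hc : (fun i => round (z i / M)) ∈ S := by
      rw [← hS]
      intro i
      have h := abs_sub_round (z i / M)
      have e : z i - M * (round (z i / M) : ℝ) = M * (z i / M - round (z i / M)) := by
        field_simp
      rw [e, abs_mul, abs_of_pos hM]
      nlinarith
    exact (hb _ ((hS _).2 hc)).trans (Finset.single_le_sum (fun c _ => ha0 c) hc)
  · calc ∑ c ∈ S, a c ≤ S.card • X := Finset.sum_le_card_nsmul _ _ _ fun c hc => ha c ((hS c).2 hc)
      _ ≤ 2 ^ d * X := by rw [nsmul_eq_mul]; gcongr

theorem s_power_locally_constant (d : ℕ) (hd : 1 ≤ d) (s : ℝ) (hs0 : 0 < s) (hs1 : s ≤ 1) :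
    ∃ C : ℝ, 0 < C ∧ ∃ C' : ℕ → ℝ,
      ∀ M : ℝ, 1 ≤ M →
      ∃ η : Rd d → ℝ, (∀ z, 0 ≤ η z) ∧
        (∀ F : SchwartzMap (Rd d) ℂ,
          (Function.support (ftransform fun y => F y) ⊆ {ξ : Rd d | ∀ i, |ξ i| ≤ 1 / 2}) →
          ∀ z : Rd d,
            ‖F z‖ ^ s ≤ (∑' c : Fin d → ℤ,
                (⨆ w : latticeMCube M c, ‖F (w : Rd d)‖) ^ s *
                  Set.indicator (latticeMCube M c) (fun _ => (1 : ℝ)) z) ∧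
            (∑' c : Fin d → ℤ,
                (⨆ w : latticeMCube M c, ‖F (w : Rd d)‖) ^ s *
                  Set.indicator (latticeMCube M c) (fun _ => (1 : ℝ)) z)
              ≤ C * M ^ (d : ℝ) * ∫ y : Rd d, ‖F y‖ ^ s * η (z - y)) ∧
        (∀ N : ℕ, ∀ z : Rd d,
          η z ≤ C' N * M ^ (-(d : ℝ)) * (1 + 2 * M⁻¹ * (⨆ i, |z i|)) ^ (-(N : ℝ))) := by
  obtain ⟨V, hV, G, hVG⟩ := exists_kernel d hs0 hs1
  obtain ⟨K, hK0, Φ, hΦa, hΦ0, hGΦ, hΦK⟩ := exists_majorant G hs0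
  refine ⟨2 ^ d * (V + 1), by positivity, fun N => K N * (2 * d + 2) ^ N, fun M hM => ?_⟩
  have hM0 : 0 < M := by linarith
  refine ⟨fun z => M ^ (-(d : ℝ)) * Φ (‖z‖ / M - d),
    fun z => mul_nonneg (by positivity) (hΦ0 _), fun F hF z => ?_, fun N z => ?_⟩
  · have hmeas : Measurable fun y : Rd d => Φ (‖z - y‖ / M - d) :=
      hΦa.measurable.comp (by fun_prop)
    have hint : Integrable fun y => ‖F y‖ ^ s * Φ (‖z - y‖ / M - d) := by
      refine (schwartz_rpow_integrable F hs0).mul_bdd (c := K 0) hmeas.aestronglyMeasurable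
        (Eventually.of_forall fun y => ?_)
      rw [Real.norm_of_nonneg (hΦ0 _)]
      simpa using hΦK 0 (‖z - y‖ / M - d)
    set J := ∫ y, ‖F y‖ ^ s * Φ (‖z - y‖ / M - d) with hJ
    have hJ0 : 0 ≤ J := integral_nonneg fun y => mul_nonneg (by positivity) (hΦ0 _)
    have hJeq : M ^ (d : ℝ) * ∫ y : Rd d, ‖F y‖ ^ s * (M ^ (-(d : ℝ)) * Φ (‖z - y‖ / M - d))
        = J := by
      rw [hJ, ← integral_const_mul]
      congr 1
      ext y
      have : M ^ (d : ℝ) * M ^ (-(d : ℝ)) = 1 := by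
        rw [← Real.rpow_add hM0, add_neg_cancel, Real.rpow_zero]
      linear_combination ‖F y‖ ^ s * Φ (‖z - y‖ / M - d) * this
    have hpt : ∀ c, z ∈ latticeMCube M c → ∀ w ∈ latticeMCube M c, ‖F w‖ ^ s ≤ V * J := by
      intro c hz w hw
      have hzw : ‖z - w‖ ≤ d * M := by
        refine norm_le_of_coord _ hM0.le fun i => ?_
        have h1 := abs_le.1 (hz i)
        have h2 := abs_le.1 (hw i)
        rw [PiLp.sub_apply, abs_le]
        constructor <;> linarith [h1.1, h1.2, h2.1, h2.2]
      refine (hVG F hF w).trans (mul_le_mul_of_nonneg_left ?_ hV)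
      refine integral_mono_of_nonneg (Eventually.of_forall fun y => by positivity) hint
        (Eventually.of_forall fun y => ?_)
      refine mul_le_mul_of_nonneg_left ((hGΦ _).trans (hΦa ?_)) (by positivity)
      -- This is where `M ≥ 1` enters: `‖z - y‖ ≤ d * M + ‖y - w‖ ≤ (d + ‖y - w‖) * M`.
      rw [sub_le_iff_le_add, div_le_iff₀ hM0]
      have h3 := norm_sub_le_norm_sub_add_norm_sub z w y
      rw [norm_sub_rev w y] at h3
      nlinarith [norm_nonneg (y - w)]
    have hbdd : ∀ c : Fin d → ℤ, BddAbove (Set.range fun w : latticeMCube M c => ‖F (w : Rd d)‖) := by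
      intro c
      obtain ⟨L, -, hL⟩ := F.toBoundedContinuousFunction.isBounded_range.exists_pos_norm_le
      exact ⟨L, by rintro _ ⟨w, rfl⟩; exact hL _ ⟨(w : Rd d), rfl⟩⟩
    have hsup0 : ∀ c : Fin d → ℤ, 0 ≤ ⨆ w : latticeMCube M c, ‖F (w : Rd d)‖ :=
      fun c => Real.iSup_nonneg fun w => norm_nonneg _
    have h := sum_cubes_le hM0 z
      (fun c => (⨆ w : latticeMCube M c, ‖F (w : Rd d)‖) ^ s) (X := V * J) (by positivity)
      (fun c => Real.rpow_nonneg (hsup0 c) s) (fun c hz => ?_) (b := ‖F z‖ ^ s) (fun c hz => ?_)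
    · refine ⟨h.1, h.2.trans ?_⟩
      rw [mul_assoc (2 ^ d * (V + 1)), hJeq]
      have : 0 ≤ 2 ^ d * J := by positivity
      nlinarith
    · rw [← Real.le_rpow_inv_iff_of_pos (hsup0 c) (by positivity) hs0]
      have : Nonempty (latticeMCube M c) := ⟨⟨z, hz⟩⟩
      refine ciSup_le fun w => ?_
      rw [Real.le_rpow_inv_iff_of_pos (norm_nonneg _) (by positivity) hs0]
      exact hpt c hz w w.2
    · exact Real.rpow_le_rpow (norm_nonneg _) (le_ciSup (hbdd c) ⟨z, hz⟩) hs0.le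
  · have hsup : (⨆ i, |z i|) ≤ ‖z‖ := Real.iSup_le (fun i => PiLp.norm_apply_le z i) (norm_nonneg _)
    have hsup0 : 0 ≤ ⨆ i, |z i| := Real.iSup_nonneg fun i => abs_nonneg _
    set t := ‖z‖ / M with ht
    have hcmp : 1 + 2 * M⁻¹ * (⨆ i, |z i|) ≤ (2 * d + 2) * (1 + max (t - d) 0) := by
      have h1 : M⁻¹ * (⨆ i, |z i|) ≤ t := by
        rw [ht, div_eq_inv_mul]
        gcongr
      have h2 := le_max_left (t - d) 0
      have h3 := le_max_right (t - d) 0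
      have hd0 : (0 : ℝ) ≤ d := by positivity
      nlinarith
    have hpos : 0 < 1 + 2 * M⁻¹ * (⨆ i, |z i|) := by positivity
    have hpos' : 0 < 1 + max (t - d) 0 := by positivity
    have hkey : (1 + max (t - d) 0) ^ (-(N : ℝ)) ≤
        (2 * d + 2) ^ N * (1 + 2 * M⁻¹ * (⨆ i, |z i|)) ^ (-(N : ℝ)) := by
      rw [Real.rpow_neg hpos'.le, Real.rpow_neg hpos.le, Real.rpow_natCast, Real.rpow_natCast,
        ← div_eq_mul_inv, le_div_iff₀ (by positivity), inv_mul_le_iff₀ (by positivity), ← mul_pow]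
      exact pow_le_pow_left₀ hpos.le (by linarith) N
    calc M ^ (-(d : ℝ)) * Φ (t - d)
        ≤ M ^ (-(d : ℝ)) * (K N * ((2 * d + 2) ^ N *
            (1 + 2 * M⁻¹ * (⨆ i, |z i|)) ^ (-(N : ℝ)))) := by
          refine mul_le_mul_of_nonneg_left ?_ (by positivity)
          exact (hΦK N _).trans (mul_le_mul_of_nonneg_left hkey (hK0 N))
      _ = _ := by ring
end
end
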